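/- arXiv:2503.11126 — 6 statements merged into one kernel-verified Lean document; each statement's English description precedes it below -/
import Mathlib

section
/- Let λ ∈ (0,1) and k ≥ 1, let T ⊆ M be a finite set with |T| > k, and let S = {z_1, …, z_k} be produced by greedy selection of k items from T with parameter λ. Then for every t ∈ T ∖ S one has Q(S ∪ {t}) − Q(S) ≤ F(S)/(k·λ); equivalently, q(t) ≤ F(S)/(k·λ). -/
open Finset

def IsGreedySel {ι : Type*} (qf : ι → ℝ) (df : ι → ι → ℝ) (a b : ℝ)
    (T : Finset ι) (k : ℕ) (z : Fin k → ι) : Prop :=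
  Function.Injective z ∧ (∀ i, z i ∈ T) ∧
  (∀ hk : 0 < k, ∀ t ∈ T, qf t ≤ qf (z ⟨0, hk⟩)) ∧
  ∀ i : Fin k, ∀ t ∈ T, (∀ j : Fin k, j < i → t ≠ z j) →
    a * qf t + b * ∑ j ∈ Finset.filter (fun j => j < i) Finset.univ, df t (z j) ≤
      a * qf (z i) + b * ∑ j ∈ Finset.filter (fun j => j < i) Finset.univ, df (z i) (z j)

noncomputable def Qsum {M : Type*} (q : M → ℝ) (S : Finset M) : ℝ := ∑ u ∈ S, q u

noncomputable def Dsum {M : Type*} [MetricSpace M] [DecidableEq M] (S : Finset M) : ℝ :=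
  ∑ p ∈ S.offDiag, dist p.1 p.2

noncomputable def Fobj {M : Type*} [MetricSpace M] [DecidableEq M]
    (q : M → ℝ) (lam : ℝ) (S : Finset M) : ℝ :=
  lam * Qsum q S + (1 - lam) * Dsum S

def IsOptSubset {M : Type*} [MetricSpace M] [DecidableEq M] (q : M → ℝ) (lam : ℝ)
    (T : Finset M) (k : ℕ) (O : Finset M) : Prop :=
  O ⊆ T ∧ O.card = k ∧ ∀ B ⊆ T, B.card = k → Fobj q lam B ≤ Fobj q lam O

theorem stmt_0 {M : Type*} [MetricSpace M] [DecidableEq M]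
    (q : M → ℝ) (hq : ∀ u, 0 ≤ q u)
    (lam : ℝ) (hlam0 : 0 < lam) (hlam1 : lam < 1)
    (k : ℕ) (hk : 1 ≤ k)
    (T : Finset M) (hT : k < T.card)
    (z : Fin k → M)
    (hz : IsGreedySel q (fun u v => dist u v) lam (1 - lam) T k z)
    (S : Finset M) (hS : S = Finset.univ.image z)
    (t : M) (ht : t ∈ T \ S) :
    Qsum q (insert t S) - Qsum q S ≤ Fobj q lam S / (k * lam) ∧
      q t ≤ Fobj q lam S / (k * lam) := by
  obtain ⟨hinj, hmem, -, hgr⟩ := hz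
  have htT : t ∈ T := (Finset.mem_sdiff.1 ht).1
  have htS : t ∉ S := (Finset.mem_sdiff.1 ht).2
  have hne : ∀ j, t ≠ z j := by
    intro j h
    apply htS
    rw [hS, h]
    exact Finset.mem_image_of_mem z (Finset.mem_univ j)
  have hQ : Qsum q S = ∑ i, q (z i) := by
    unfold Qsum
    rw [hS, Finset.sum_image (fun a _ b _ h => hinj h)]
  have hD : Dsum S = ∑ i, ∑ j, dist (z i) (z j) := by
    unfold Dsum
    have h1 : ∑ p ∈ S.offDiag, dist p.1 p.2 = ∑ p ∈ S ×ˢ S, dist p.1 p.2 := by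
      apply Finset.sum_subset
      · intro p hp
        rw [Finset.mem_offDiag] at hp
        exact Finset.mem_product.2 ⟨hp.1, hp.2.1⟩
      · intro p hp hp2
        rw [Finset.mem_product] at hp
        rw [Finset.mem_offDiag] at hp2
        have : p.1 = p.2 := by
          by_contra h
          exact hp2 ⟨hp.1, hp.2, h⟩
        rw [this, dist_self]
    rw [h1, Finset.sum_product, hS, Finset.sum_image (fun a _ b _ h => hinj h)]
    refine Finset.sum_congr rfl fun i _ => ?_
    rw [Finset.sum_image (fun a _ b _ h => hinj h)]
  have hstep : ∀ i : Fin k,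
      lam * q t ≤ lam * q (z i) + (1 - lam) * ∑ j, dist (z i) (z j) := by
    intro i
    have h := hgr i t htT (fun j _ => hne j)
    have hb : 0 ≤ 1 - lam := by linarith
    have h1 : 0 ≤ (1 - lam) * ∑ j ∈ Finset.filter (fun j => j < i) Finset.univ, dist t (z j) :=
      mul_nonneg hb (Finset.sum_nonneg fun _ _ => dist_nonneg)
    have h2 : (1 - lam) * ∑ j ∈ Finset.filter (fun j => j < i) Finset.univ, dist (z i) (z j)
        ≤ (1 - lam) * ∑ j, dist (z i) (z j) :=
      mul_le_mul_of_nonneg_left (Finset.sum_le_sum_of_subset_of_nonneg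
        (Finset.filter_subset _ _) (fun _ _ _ => dist_nonneg)) hb
    simp only at h
    linarith
  have hsum := Finset.sum_le_sum (fun i (_ : i ∈ (Finset.univ : Finset (Fin k))) => hstep i)
  rw [Finset.sum_add_distrib, ← Finset.mul_sum, ← Finset.mul_sum, ← Finset.mul_sum, ← hQ, ← hD,
    Finset.sum_const, Finset.card_univ, Fintype.card_fin, nsmul_eq_mul] at hsum
  have hk0 : (0 : ℝ) < k := by exact_mod_cast hk
  have main : q t ≤ Fobj q lam S / (k * lam) := by
    rw [le_div_iff₀ (mul_pos hk0 hlam0)]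
    unfold Fobj
    linarith
  refine ⟨?_, main⟩
  have : Qsum q (insert t S) = q t + Qsum q S := Finset.sum_insert htS
  linarith
end

section
/- Let λ ∈ (0,1) and k ≥ 2, let T ⊆ M be a finite set with |T| > k, and let S = {z_1, …, z_k} be produced by greedy selection of k items from T with parameter λ. Then for every t ∈ T ∖ S one has min_{z ∈ S} d(t, z) ≤ 2.5·F(S)/(k·(k−1)·(1−λ)). -/
open Finset

theorem stmt_1 {M : Type*} [MetricSpace M] [DecidableEq M]
    (q : M → ℝ) (hq : ∀ u, 0 ≤ q u)
    (lam : ℝ) (hlam0 : 0 < lam) (hlam1 : lam < 1)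
    (k : ℕ) (hk : 2 ≤ k)
    (T : Finset M) (hT : k < T.card)
    (z : Fin k → M)
    (hz : IsGreedySel q (fun u v => dist u v) lam (1 - lam) T k z)
    (S : Finset M) (hS : S = Finset.univ.image z)
    (t : M) (ht : t ∈ T \ S) :
    ∃ zz ∈ S, dist t zz ≤ 2.5 * Fobj q lam S / (k * (k - 1) * (1 - lam)) := by
  obtain ⟨hinj, hmem, -, hg⟩ := hz
  have htT : t ∈ T := (Finset.mem_sdiff.1 ht).1
  have htS : t ∉ S := (Finset.mem_sdiff.1 ht).2
  have hzS : ∀ i, z i ∈ S := fun i => by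
    rw [hS]; exact Finset.mem_image_of_mem _ (Finset.mem_univ i)
  obtain ⟨w, hwS, hw⟩ := Finset.exists_min_image S (fun u => dist t u) ⟨_, hzS ⟨0, by omega⟩⟩
  refine ⟨w, hwS, ?_⟩
  have hb : 0 < 1 - lam := by linarith
  have hQ : Qsum q S = ∑ i, q (z i) := by
    rw [Qsum, hS, Finset.sum_image (fun x _ y _ h => hinj h)]
  have hD : ∑ i : Fin k, ∑ j ∈ Finset.filter (fun j => j < i) Finset.univ, dist (z i) (z j)
      ≤ Dsum S := by
    rw [Finset.sum_sigma', Dsum,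
      ← Finset.sum_image (f := fun p : M × M => dist p.1 p.2)
        (g := fun x : (_ : Fin k) × Fin k => (z x.1, z x.2))]
    · apply Finset.sum_le_sum_of_subset_of_nonneg
      · intro p hp
        simp only [Finset.mem_image, Finset.mem_sigma, Finset.mem_filter, Finset.mem_univ,
          true_and] at hp
        obtain ⟨x, hx, rfl⟩ := hp
        rw [Finset.mem_offDiag]
        exact ⟨hzS _, hzS _, fun h => hx.ne (hinj h).symm⟩
      · intros; exact dist_nonneg
    · rintro ⟨x1, x2⟩ _ ⟨y1, y2⟩ _ h
      simp only [Prod.mk.injEq] at h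
      obtain ⟨h1, h2⟩ := h
      rw [hinj h1, hinj h2]
  have hi : ∀ i : Fin k, (1 - lam) * (((i : ℕ) : ℝ) * dist t w) ≤ lam * q (z i) +
      (1 - lam) * ∑ j ∈ Finset.filter (fun j => j < i) Finset.univ, dist (z i) (z j) := by
    intro i
    have h1 := hg i t htT (fun j _ h => htS (h ▸ hzS j))
    have h2 : ((i : ℕ) : ℝ) * dist t w ≤
        ∑ j ∈ Finset.filter (fun j => j < i) Finset.univ, dist t (z j) := by
      have := Finset.card_nsmul_le_sum (Finset.filter (fun j => j < i) Finset.univ)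
        (fun j => dist t (z j)) (dist t w) (fun j _ => hw _ (hzS j))
      have hc : (Finset.filter (fun j => j < i) Finset.univ).card = (i : ℕ) := by
        simp [Finset.filter_gt_eq_Iio]
      rwa [hc, nsmul_eq_mul] at this
    have h3 := mul_le_mul_of_nonneg_left h2 hb.le
    have h4 := mul_nonneg hlam0.le (hq t)
    linarith
  have hsum := Finset.sum_le_sum (fun i (_ : i ∈ (Finset.univ : Finset (Fin k))) => hi i)
  rw [Finset.sum_add_distrib, ← Finset.mul_sum, ← Finset.mul_sum, ← Finset.mul_sum,
    ← Finset.sum_mul, ← hQ, Fin.sum_univ_eq_sum_range (fun n => (n : ℝ)) k] at hsum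
  have hgauss : (∑ n ∈ Finset.range k, (n : ℝ)) * 2 = k * (k - 1) := by
    have := Finset.sum_range_id_mul_two k
    have h' : (((∑ n ∈ Finset.range k, n) * 2 : ℕ) : ℝ) = ((k * (k - 1) : ℕ) : ℝ) := by
      rw [this]
    rw [Nat.cast_mul, Nat.cast_mul, Nat.cast_sub (by omega)] at h'
    push_cast at h'
    exact h'
  have hF : (1 - lam) * ((∑ n ∈ Finset.range k, (n : ℝ)) * dist t w) ≤ Fobj q lam S := by
    have := mul_le_mul_of_nonneg_left hD hb.le
    rw [Fobj]; linarith
  have hk' : (2 : ℝ) ≤ k := by exact_mod_cast hk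
  have hpos : 0 < (k : ℝ) * (k - 1) * (1 - lam) :=
    mul_pos (mul_pos (by linarith) (by linarith)) hb
  rw [le_div_iff₀ hpos, ← hgauss]
  have h0 : 0 ≤ (1 - lam) * ((∑ n ∈ Finset.range k, (n : ℝ)) * dist t w) :=
    mul_nonneg hb.le (mul_nonneg (Finset.sum_nonneg fun _ _ => Nat.cast_nonneg _) dist_nonneg)
  norm_num
  linarith
end

section
/- Let λ ∈ (0,1) and k ≥ 1, let T ⊆ M be a finite set with |T| > k, and let S = {z_1, …, z_k} be produced by greedy selection of k items from T with parameter λ. Then for every t ∈ T ∖ S one has F(S) ≥ (1−λ)·Σ_{i=1}^{k−1} (k−i)·d(t, z_i) + λ·k·q(t). -/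
open Finset

theorem stmt_2 {M : Type*} [MetricSpace M] [DecidableEq M]
    (q : M → ℝ) (hq : ∀ u, 0 ≤ q u)
    (lam : ℝ) (hlam0 : 0 < lam) (hlam1 : lam < 1)
    (k : ℕ) (hk : 1 ≤ k)
    (T : Finset M) (hT : k < T.card)
    (z : Fin k → M)
    (hz : IsGreedySel q (fun u v => dist u v) lam (1 - lam) T k z)
    (S : Finset M) (hS : S = Finset.univ.image z)
    (t : M) (ht : t ∈ T \ S) :
    (1 - lam) * (∑ i : Fin k, ((k - 1 - (i : ℕ) : ℕ) : ℝ) * dist t (z i)) +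
        lam * k * q t ≤ Fobj q lam S := by
  obtain ⟨hinj, hzT, -, hg⟩ := hz
  rw [Finset.mem_sdiff] at ht
  obtain ⟨htT, htS⟩ := ht
  have hne : ∀ j, t ≠ z j := by
    intro j h
    apply htS
    rw [hS, h]
    exact Finset.mem_image_of_mem _ (Finset.mem_univ _)
  have h1 : Qsum q S = ∑ i, q (z i) := by
    unfold Qsum
    rw [hS, Finset.sum_image (fun a _ b _ h => hinj h)]
  have h2 : Dsum S = ∑ i, ∑ j, dist (z i) (z j) := by
    unfold Dsum
    have e : ∑ p ∈ S.offDiag, dist p.1 p.2 = ∑ p ∈ S ×ˢ S, dist p.1 p.2 := by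
      apply Finset.sum_subset
      · intro p hp
        rw [Finset.mem_offDiag] at hp
        exact Finset.mem_product.2 ⟨hp.1, hp.2.1⟩
      · intro p hp hp'
        rw [Finset.mem_product] at hp
        rw [Finset.mem_offDiag] at hp'
        rw [dist_eq_zero]
        by_contra h
        exact hp' ⟨hp.1, hp.2, h⟩
    rw [e, Finset.sum_product, hS, Finset.sum_image (fun a _ b _ h => hinj h)]
    refine Finset.sum_congr rfl fun i _ => ?_
    rw [Finset.sum_image (fun a _ b _ h => hinj h)]
  have h3 : ∑ i : Fin k, ∑ j ∈ Finset.filter (fun j => j < i) Finset.univ, dist (z i) (z j)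
      ≤ Dsum S := by
    rw [h2]
    refine Finset.sum_le_sum fun i _ => ?_
    exact Finset.sum_le_sum_of_subset_of_nonneg (Finset.filter_subset _ _)
      (fun _ _ _ => dist_nonneg)
  have h4 : ∑ i : Fin k, ∑ j ∈ Finset.filter (fun j => j < i) Finset.univ, dist t (z j)
      = ∑ i : Fin k, ((k - 1 - (i : ℕ) : ℕ) : ℝ) * dist t (z i) := by
    simp_rw [Finset.sum_filter]
    rw [Finset.sum_comm]
    refine Finset.sum_congr rfl fun j _ => ?_
    rw [← Finset.sum_filter, Finset.sum_const, nsmul_eq_mul]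
    congr 2
    have : Finset.filter (fun i : Fin k => j < i) Finset.univ = Finset.Ioi j := by
      ext i; simp
    rw [this, Fin.card_Ioi]
  have h5 := Finset.sum_le_sum fun (i : Fin k) (_ : i ∈ Finset.univ) =>
    hg i t htT (fun j _ => hne j)
  simp only [Finset.sum_add_distrib, ← Finset.mul_sum] at h5
  rw [h4] at h5
  simp only [Finset.sum_const, Finset.card_univ, Fintype.card_fin, nsmul_eq_mul] at h5
  have h6 := mul_le_mul_of_nonneg_left h3 (sub_nonneg.2 hlam1.le)
  unfold Fobj
  rw [h1]
  linarith
end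

section
/- Let λ ∈ (0,1) and k ≥ 1, let T ⊆ M be a finite set with |T| > k, and let S = {z_1, …, z_k} be produced by greedy selection of k items from T with parameter λ. Then for every t ∈ T ∖ S one has 2.5·F(S) ≥ (1−λ)·(k−1)·Σ_{i=1}^{k} d(t, z_i). -/
open Finset

lemma split_sum_aux {k : ℕ} (f : Fin k → Fin k → ℝ) :
    ∑ i, ∑ j, f i j = (∑ i, ∑ j ∈ Finset.filter (fun j => j < i) Finset.univ, f i j)
      + (∑ i, ∑ j ∈ Finset.filter (fun j => j < i) Finset.univ, f j i) + ∑ i, f i i := by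
  have h2 : (∑ i, ∑ j ∈ Finset.filter (fun j => j < i) Finset.univ, f j i)
      = ∑ i, ∑ j, if i < j then f i j else 0 := by
    simp only [Finset.sum_filter]
    rw [Finset.sum_comm]
  have h3 : ∑ i, f i i = ∑ i, ∑ j, if i = j then f i j else 0 := by
    simp
  rw [h2, h3]
  simp only [Finset.sum_filter, ← Finset.sum_add_distrib]
  refine Finset.sum_congr rfl fun i _ => Finset.sum_congr rfl fun j _ => ?_
  rcases lt_trichotomy i j with h | h | h
  · simp [h, h.ne, h.not_gt]
  · simp [h]
  · simp [h, h.ne', h.not_gt]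

theorem stmt_4 {M : Type*} [MetricSpace M] [DecidableEq M]
    (q : M → ℝ) (hq : ∀ u, 0 ≤ q u)
    (lam : ℝ) (hlam0 : 0 < lam) (hlam1 : lam < 1)
    (k : ℕ) (hk : 1 ≤ k)
    (T : Finset M) (hT : k < T.card)
    (z : Fin k → M)
    (hz : IsGreedySel q (fun u v => dist u v) lam (1 - lam) T k z)
    (S : Finset M) (hS : S = Finset.univ.image z)
    (t : M) (ht : t ∈ T \ S) :
    (1 - lam) * (k - 1) * (∑ i : Fin k, dist t (z i)) ≤ 2.5 * Fobj q lam S := by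
  obtain ⟨hinj, hzT, -, hg⟩ := hz
  rw [Finset.mem_sdiff] at ht
  obtain ⟨htT, htS⟩ := ht
  have hne : ∀ j, t ≠ z j := fun j h => htS (by rw [hS, h]; simp)
  have hQ : Qsum q S = ∑ i, q (z i) := by
    rw [Qsum, hS, Finset.sum_image (fun a _ b _ h => hinj h)]
  have hD : Dsum S = ∑ i, ∑ j, dist (z i) (z j) := by
    have : Dsum S = ∑ p ∈ S ×ˢ S, dist p.1 p.2 := by
      rw [Dsum]
      apply Finset.sum_subset
      · intro p hp
        simp only [Finset.mem_offDiag] at hp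
        simp [hp.1, hp.2.1]
      · intro p hp hp'
        simp only [Finset.mem_product] at hp
        simp only [Finset.mem_offDiag, hp.1, hp.2, true_and, not_not, ne_eq] at hp'
        simp [hp']
    rw [this, Finset.sum_product, hS, Finset.sum_image (fun a _ b _ h => hinj h)]
    refine Finset.sum_congr rfl fun i _ => ?_
    rw [Finset.sum_image (fun a _ b _ h => hinj h)]
  rw [split_sum_aux (fun i j => dist (z i) (z j))] at hD
  simp only [dist_self, Finset.sum_const_zero, add_zero] at hD
  have hsym : (∑ i, ∑ j ∈ Finset.filter (fun j => j < i) Finset.univ, dist (z j) (z i))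
      = ∑ i, ∑ j ∈ Finset.filter (fun j => j < i) Finset.univ, dist (z i) (z j) := by
    simp only [dist_comm]
  rw [hsym] at hD
  have hAB := split_sum_aux (fun (_ j : Fin k) => dist t (z j))
  rw [Finset.sum_const] at hAB
  simp only [Finset.card_univ, Fintype.card_fin, nsmul_eq_mul] at hAB
  have hE : (∑ i, ∑ j ∈ Finset.filter (fun j => j < i) Finset.univ, dist t (z i))
      ≤ (∑ i, ∑ j ∈ Finset.filter (fun j => j < i) Finset.univ, dist t (z j))
       + ∑ i, ∑ j ∈ Finset.filter (fun j => j < i) Finset.univ, dist (z i) (z j) := by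
    simp only [← Finset.sum_add_distrib]
    refine Finset.sum_le_sum fun i _ => Finset.sum_le_sum fun j _ => ?_
    rw [dist_comm (z i)]
    exact dist_triangle _ _ _
  have hA : (1 - lam) * (∑ i, ∑ j ∈ Finset.filter (fun j => j < i) Finset.univ, dist t (z j))
      ≤ lam * (∑ i, q (z i)) + (1 - lam) *
        ∑ i, ∑ j ∈ Finset.filter (fun j => j < i) Finset.univ, dist (z i) (z j) := by
    simp only [Finset.mul_sum (s := (Finset.univ : Finset (Fin k))), ← Finset.sum_add_distrib]
    refine Finset.sum_le_sum fun i _ => ?_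
    have := hg i t htT (fun j _ => hne j)
    have h0 := mul_nonneg hlam0.le (hq t)
    simp only at this
    linarith
  have hE0 : 0 ≤ ∑ i, ∑ j ∈ Finset.filter (fun j => j < i) Finset.univ, dist (z i) (z j) :=
    Finset.sum_nonneg fun i _ => Finset.sum_nonneg fun j _ => dist_nonneg
  have hQ0 : 0 ≤ lam * ∑ i, q (z i) :=
    mul_nonneg hlam0.le (Finset.sum_nonneg fun i _ => hq _)
  rw [Fobj, hQ, hD]
  set E := ∑ i, ∑ j ∈ Finset.filter (fun j => j < i) Finset.univ, dist (z i) (z j)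
  set A := ∑ i, ∑ j ∈ Finset.filter (fun j => j < i) Finset.univ, dist t (z j)
  set B := ∑ i, ∑ j ∈ Finset.filter (fun j => j < i) Finset.univ, dist t (z i)
  set X := ∑ i, dist t (z i)
  have hb : 0 ≤ 1 - lam := by linarith
  have e1 : (1 - lam) * (k - 1) * X = (1 - lam) * A + (1 - lam) * B := by
    linear_combination (1 - lam) * hAB
  have e2 := mul_le_mul_of_nonneg_left hE hb
  have e3 := mul_nonneg hb hE0
  rw [e1]
  norm_num
  linarith
end

section
/- (Intermediate step in the proof of Theorem 1.) Let λ ∈ (0,1) and k ≥ 2. Then F(O) ≤ 8·F(opt(S_1 ∪ … ∪ S_l | k)). -/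
open Finset

lemma aux_match {M : Type*} [DecidableEq M] (X Y : Finset M) (h : X.card ≤ Y.card)
    (c : M → M → ℝ) (C : ℝ) (hC : ∀ x ∈ X, ∑ y ∈ Y, c x y ≤ C) :
    ∃ φ : M → M, Set.InjOn φ X ∧ (∀ x ∈ X, φ x ∈ Y) ∧
      (Y.card : ℝ) * ∑ x ∈ X, c x (φ x) ≤ X.card * C := by
  classical
  rcases X.eq_empty_or_nonempty with rfl | hX
  · exact ⟨id, by simp, by simp, by simp⟩
  have hn : 0 < Y.card := lt_of_lt_of_le hX.card_pos h
  obtain ⟨n, hYn⟩ : ∃ n, n = Y.card := ⟨_, rfl⟩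
  have : NeZero n := ⟨by omega⟩
  let e : Fin n ≃ Y := (finCongr hYn).trans Y.equivFin.symm
  let f : X → Fin n := fun x => Fin.castLE (hYn ▸ h) (X.equivFin x)
  have hf : Function.Injective f := fun a b hab => by
    have := Fin.castLE_injective _ hab
    exact X.equivFin.injective this
  let φ : Fin n → M → M := fun s x => if hx : x ∈ X then (e (f ⟨x, hx⟩ + s) : M) else x
  have hsum : ∑ s : Fin n, ∑ x ∈ X, c x (φ s x) ≤ X.card * C := by
    rw [Finset.sum_comm, ← nsmul_eq_mul]
    apply Finset.sum_le_card_nsmul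
    intro x hx
    refine le_trans (le_of_eq ?_) (hC x hx)
    simp only [φ, hx, dif_pos]
    rw [← Finset.sum_coe_sort Y, ← e.sum_comp,
      ← Equiv.sum_comp (Equiv.addLeft (f ⟨x, hx⟩)) (fun s => c x (e s))]
    rfl
  obtain ⟨s, -, hs⟩ : ∃ s ∈ (Finset.univ : Finset (Fin n)),
      ∑ x ∈ X, c x (φ s x) ≤ (X.card * C) / n := by
    apply Finset.exists_le_of_sum_le ⟨0, Finset.mem_univ _⟩
    rw [Finset.sum_const, Finset.card_univ, Fintype.card_fin, nsmul_eq_mul]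
    have : (n : ℝ) ≠ 0 := by exact_mod_cast NeZero.ne n
    rw [mul_div_cancel₀ _ this]
    exact hsum
  refine ⟨φ s, ?_, ?_, ?_⟩
  · intro x hx y hy hxy
    have hx' : x ∈ X := hx
    have hy' : y ∈ X := hy
    simp only [φ, hx', hy', dif_pos] at hxy
    have h1 := e.injective (Subtype.ext hxy)
    have h2 := hf (add_right_cancel h1)
    exact congrArg Subtype.val h2
  · intro x hx
    simp only [φ, hx, dif_pos]
    exact (e _).2
  · rw [← hYn]
    have : (0 : ℝ) < n := by rw [hYn]; exact_mod_cast hn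
    rw [le_div_iff₀ this] at hs
    linarith

lemma aux_Dsum {M : Type*} [MetricSpace M] [DecidableEq M] (S : Finset M) :
    Dsum S = ∑ u ∈ S, ∑ v ∈ S, dist u v := by
  unfold Dsum
  rw [← Finset.sum_product' S S (fun u v => dist u v)]
  apply Finset.sum_subset
  · intro p hp
    rw [Finset.mem_offDiag] at hp
    exact Finset.mem_product.2 ⟨hp.1, hp.2.1⟩
  · intro p hp hn
    rw [Finset.mem_product] at hp
    rw [Finset.mem_offDiag] at hn
    have : p.1 = p.2 := by
      by_contra hne
      exact hn ⟨hp.1, hp.2, hne⟩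
    rw [this, dist_self]

lemma aux_map {M : Type*} [MetricSpace M] [DecidableEq M] (O : Finset M) (ψ : M → M)
    (hψ : Set.InjOn ψ O) :
    Dsum O ≤ Dsum (O.image ψ) + 2 * ((O.card : ℝ) - 1) * ∑ o ∈ O, dist o (ψ o) := by
  rw [aux_Dsum, aux_Dsum, Finset.sum_image hψ]
  simp_rw [Finset.sum_image hψ]
  have key : ∀ u ∈ O, ∑ v ∈ O, dist u v ≤ ∑ v ∈ O, dist (ψ u) (ψ v)
      + (((O.card : ℝ) - 2) * dist u (ψ u) + ∑ v ∈ O, dist v (ψ v)) := by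
    intro u hu
    rw [← Finset.add_sum_erase O (fun v => dist u v) hu,
      ← Finset.add_sum_erase O (fun v => dist (ψ u) (ψ v)) hu,
      ← Finset.add_sum_erase O (fun v => dist v (ψ v)) hu]
    simp only [dist_self]
    have h1 : ∑ v ∈ O.erase u, dist u v ≤ ∑ v ∈ O.erase u,
        (dist u (ψ u) + dist (ψ u) (ψ v) + dist v (ψ v)) := by
      apply Finset.sum_le_sum
      intro v _
      have a1 := dist_triangle u (ψ u) v
      have a2 := dist_triangle (ψ u) (ψ v) v
      rw [dist_comm (ψ v) v] at a2
      linarith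
    rw [Finset.sum_add_distrib, Finset.sum_add_distrib, Finset.sum_const, nsmul_eq_mul,
      Finset.cast_card_erase_of_mem hu] at h1
    linarith
  have := Finset.sum_le_sum key
  rw [Finset.sum_add_distrib, Finset.sum_add_distrib, ← Finset.mul_sum, Finset.sum_const,
    nsmul_eq_mul] at this
  linarith

lemma aux_W (k : ℕ) : (2 : ℝ) * ∑ m : Fin k,
    (((Finset.univ.filter (fun j : Fin k => j < m)).card : ℕ) : ℝ) = k * (k - 1) := by
  have : ∀ m : Fin k, (Finset.univ.filter (fun j : Fin k => j < m)).card = (m : ℕ) := by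
    intro m
    have : Finset.univ.filter (fun j : Fin k => j < m) = Finset.Iio m := by ext; simp
    rw [this, Fin.card_Iio]
  simp_rw [this]
  rw [Fin.sum_univ_eq_sum_range (fun i => (i : ℝ)) k]
  induction k with
  | zero => simp
  | succ n ih =>
    rw [Finset.sum_range_succ, mul_add, ih ?_]
    · push_cast; ring
    · intro m
      have : Finset.univ.filter (fun j : Fin n => j < m) = Finset.Iio m := by ext; simp
      rw [this, Fin.card_Iio]

lemma aux_half (k : ℕ) (g : Fin k → Fin k → ℝ) (hs : ∀ i j, g i j = g j i)
    (h0 : ∀ i, g i i = 0) :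
    ∑ m, ∑ j, g m j = 2 * ∑ m, ∑ j ∈ Finset.univ.filter (fun j => j < m), g m j := by
  have h1 : ∀ m, ∑ j, g m j = ∑ j ∈ Finset.univ.filter (fun j => j < m), g m j
      + ∑ j ∈ Finset.univ.filter (fun j => m < j), g m j := by
    intro m
    rw [Finset.sum_filter, Finset.sum_filter, ← Finset.sum_add_distrib]
    apply Finset.sum_congr rfl
    intro j _
    rcases lt_trichotomy j m with h | h | h
    · simp [h, h.not_gt]
    · simp [h, h0]
    · simp [h, h.not_gt]
  simp_rw [h1]
  rw [Finset.sum_add_distrib, two_mul]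
  congr 1
  simp_rw [Finset.sum_filter]
  rw [Finset.sum_comm]
  refine Finset.sum_congr rfl fun i _ => Finset.sum_congr rfl fun j _ => ?_
  rw [hs]

lemma aux_point {M : Type*} [MetricSpace M] [DecidableEq M]
    (q : M → ℝ) (hq : ∀ u, 0 ≤ q u) (lam : ℝ) (hlam0 : 0 < lam) (hlam1 : lam < 1)
    (k : ℕ) (hk : 2 ≤ k) (T : Finset M) (z : Fin k → M)
    (hz : IsGreedySel q (fun u v => dist u v) lam (1 - lam) T k z)
    (o : M) (ho : o ∈ T) (hoz : ∀ j, o ≠ z j) :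
    ∑ s ∈ Finset.univ.image z, (lam * q o + 2 * ((k : ℝ) - 1) * (1 - lam) * dist o s)
      ≤ 6 * Fobj q lam (Finset.univ.image z) := by
  obtain ⟨hinj, -, -, hg⟩ := hz
  have hb : 0 < 1 - lam := by linarith
  have hk0 : (0 : ℝ) < k := by positivity
  unfold Fobj Qsum
  rw [aux_Dsum, Finset.sum_image hinj.injOn, Finset.sum_image hinj.injOn,
    Finset.sum_image hinj.injOn]
  simp_rw [Finset.sum_image hinj.injOn]
  have hhalf := aux_half k (fun i j => dist (z i) (z j)) (fun i j => dist_comm _ _)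
    (fun i => dist_self _)
  have hsum : ∑ m : Fin k, (lam * q o + (1 - lam) *
      ∑ j ∈ Finset.univ.filter (fun j => j < m), dist o (z j)) ≤
      ∑ m : Fin k, (lam * q (z m) + (1 - lam) *
      ∑ j ∈ Finset.univ.filter (fun j => j < m), dist (z m) (z j)) :=
    Finset.sum_le_sum fun m _ => hg m o ho (fun j _ => hoz j)
  simp only [Finset.sum_add_distrib, ← Finset.mul_sum, Finset.sum_const, Finset.card_univ,
    Fintype.card_fin, nsmul_eq_mul] at hsum ⊢
  have htri : ∑ m : Fin k, ∑ j ∈ Finset.univ.filter (fun j => j < m), ∑ i, dist o (z i) ≤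
      ∑ m : Fin k, ∑ j ∈ Finset.univ.filter (fun j => j < m),
        ∑ i, (dist o (z j) + dist (z j) (z i)) :=
    Finset.sum_le_sum fun m _ => Finset.sum_le_sum fun j _ => Finset.sum_le_sum fun i _ =>
      dist_triangle _ _ _
  have hcr : ∑ m : Fin k, ∑ j ∈ Finset.univ.filter (fun j => j < m),
        ∑ i, dist (z j) (z i) ≤ ∑ m : Fin k, ∑ j, ∑ i, dist (z j) (z i) :=
    Finset.sum_le_sum fun m _ => Finset.sum_le_sum_of_subset_of_nonneg
      (Finset.filter_subset _ _) (fun j _ _ => Finset.sum_nonneg fun i _ => dist_nonneg)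
  simp only [Finset.sum_add_distrib, Finset.sum_const, Finset.card_univ,
    Fintype.card_fin, nsmul_eq_mul, ← Finset.sum_mul, ← Finset.mul_sum] at htri hcr
  have hW := aux_W k
  have hQ0 : 0 ≤ ∑ m, q (z m) := Finset.sum_nonneg fun m _ => hq _
  have hqo := hq o
  generalize (∑ m : Fin k, (((Finset.univ.filter (fun j : Fin k => j < m)).card : ℕ) : ℝ)) = W at *
  generalize ∑ i, dist o (z i) = X at *
  generalize ∑ m : Fin k, ∑ j ∈ Finset.univ.filter (fun j => j < m), dist o (z j) = G at *
  generalize ∑ m : Fin k, ∑ j ∈ Finset.univ.filter (fun j => j < m), dist (z m) (z j) = P at *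
  generalize ∑ m : Fin k, ∑ j, dist (z m) (z j) = D at *
  generalize ∑ m, q (z m) = N at *
  have h1 : ((k : ℝ) - 1) * X ≤ 2 * G + 2 * D := by
    have : (k : ℝ) * (((k : ℝ) - 1) * X) ≤ k * (2 * G + 2 * D) := by
      have : (k : ℝ) * (((k : ℝ) - 1) * X) = 2 * (W * X) := by
        rw [← mul_assoc, ← hW]; ring
      linarith
    exact le_of_mul_le_mul_left this hk0
  have h2 := mul_le_mul_of_nonneg_left h1 hb.le
  have h3 : 0 ≤ (k : ℝ) * (lam * q o) := by positivity
  have h4 : 0 ≤ lam * N := by positivity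
  subst hhalf
  linarith

lemma aux_part {M : Type*} [MetricSpace M] [DecidableEq M]
    (q : M → ℝ) (hq : ∀ u, 0 ≤ q u) (lam : ℝ) (hlam0 : 0 < lam) (hlam1 : lam < 1)
    (k : ℕ) (hk : 2 ≤ k) (T : Finset M) (z : Fin k → M)
    (hz : IsGreedySel q (fun u v => dist u v) lam (1 - lam) T k z)
    (F : ℝ) (hF0 : 0 ≤ F) (hF : Fobj q lam (Finset.univ.image z) ≤ F)
    (O : Finset M) (hOT : O ⊆ T) (hOk : O.card ≤ k) :
    ∃ ψ : M → M, Set.InjOn ψ O ∧ (∀ o ∈ O, ψ o ∈ Finset.univ.image z) ∧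
      ∑ o ∈ O, (lam * (q o - q (ψ o)) + 2 * ((k : ℝ) - 1) * (1 - lam) * dist o (ψ o))
        ≤ (O.card : ℝ) / k * (6 * F) := by
  set S := Finset.univ.image z with hS
  have hb : 0 < 1 - lam := by linarith
  have hk0 : (0 : ℝ) < k := by positivity
  have hk1 : (0 : ℝ) ≤ (k : ℝ) - 1 := by
    have : (2 : ℝ) ≤ k := by exact_mod_cast hk
    linarith
  have hSk : S.card = k := by
    rw [hS, Finset.card_image_of_injective _ hz.1, Finset.card_univ, Fintype.card_fin]
  have hAR : (O ∩ S).card + (O \ S).card = O.card := Finset.card_inter_add_card_sdiff O S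
  have hSA : (O ∩ S).card + (S \ O).card = k := by
    rw [← hSk, Finset.inter_comm]; exact Finset.card_inter_add_card_sdiff S O
  obtain ⟨φ, hφi, hφm, hφ⟩ := aux_match (O \ S) (S \ O) (by omega)
    (fun o s => lam * q o + 2 * ((k : ℝ) - 1) * (1 - lam) * dist o s) (6 * F) (by
      intro x hx
      rw [Finset.mem_sdiff] at hx
      refine le_trans ?_ (le_trans (aux_point q hq lam hlam0 hlam1 k hk T z hz x (hOT hx.1) ?_)
        (mul_le_mul_of_nonneg_left hF (by norm_num)))
      · apply Finset.sum_le_sum_of_subset_of_nonneg Finset.sdiff_subset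
        intro s _ _
        have := hq x
        positivity
      · intro j hj
        exact hx.2 (by rw [hS, hj]; exact Finset.mem_image_of_mem _ (Finset.mem_univ _)))
  refine ⟨fun x => if x ∈ S then x else φ x, ?_, ?_, ?_⟩
  · intro x hx y hy hxy
    have hx' : x ∈ O := hx
    have hy' : y ∈ O := hy
    by_cases h1 : x ∈ S <;> by_cases h2 : y ∈ S <;> simp only [h1, h2, if_true, if_false] at hxy
    · exact hxy
    · have := hφm y (Finset.mem_sdiff.2 ⟨hy', h2⟩)
      rw [← hxy, Finset.mem_sdiff] at this
      exact absurd hx' this.2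
    · have := hφm x (Finset.mem_sdiff.2 ⟨hx', h1⟩)
      rw [hxy, Finset.mem_sdiff] at this
      exact absurd hy' this.2
    · exact hφi (by simp [hx', h1]) (by simp [hy', h2]) hxy
  · intro x hx
    by_cases h1 : x ∈ S
    · simp only [h1, if_true]
    · simp only [h1, if_false]
      exact (Finset.mem_sdiff.1 (hφm x (Finset.mem_sdiff.2 ⟨hx, h1⟩))).1
  · rw [← Finset.sum_inter_add_sum_sdiff O S]
    have e1 : ∑ o ∈ O ∩ S, (lam * (q o - q (if o ∈ S then o else φ o)) +
        2 * ((k : ℝ) - 1) * (1 - lam) * dist o (if o ∈ S then o else φ o)) = 0 := by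
      apply Finset.sum_eq_zero
      intro x hx
      simp [(Finset.mem_inter.1 hx).2]
    have e2 : ∑ o ∈ O \ S, (lam * (q o - q (if o ∈ S then o else φ o)) +
        2 * ((k : ℝ) - 1) * (1 - lam) * dist o (if o ∈ S then o else φ o)) ≤
        ∑ o ∈ O \ S, (lam * q o + 2 * ((k : ℝ) - 1) * (1 - lam) * dist o (φ o)) := by
      apply Finset.sum_le_sum
      intro x hx
      simp only [(Finset.mem_sdiff.1 hx).2, if_false]
      have := mul_nonneg hlam0.le (hq (φ x))
      linarith
    rw [e1, zero_add]
    refine e2.trans ?_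
    rcases Nat.eq_zero_or_pos (S \ O).card with h0 | h0
    · have : O \ S = ∅ := by rw [← Finset.card_eq_zero]; omega
      rw [this, Finset.sum_empty]
      positivity
    · generalize ∑ o ∈ O \ S, (lam * q o + 2 * ((k : ℝ) - 1) * (1 - lam) * dist o (φ o)) = Z at *
      have hRle : (O \ S).card ≤ (S \ O).card := by omega
      rw [div_mul_eq_mul_div, le_div_iff₀ hk0, ← hSA, ← hAR]
      generalize (S \ O).card = n at *
      generalize (O \ S).card = r at *
      generalize (O ∩ S).card = a at *
      have hn : (0 : ℝ) < n := by exact_mod_cast h0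
      have hrn : (r : ℝ) ≤ n := by exact_mod_cast hRle
      have hZ : Z ≤ 6 * F := by
        have h6 : (r : ℝ) * (6 * F) ≤ n * (6 * F) :=
          mul_le_mul_of_nonneg_right hrn (by positivity)
        exact le_of_mul_le_mul_left (hφ.trans h6) hn
      have ha : (0 : ℝ) ≤ a := Nat.cast_nonneg a
      have := mul_le_mul_of_nonneg_left hZ ha
      push_cast
      linarith

theorem stmt_7 {M : Type*} [MetricSpace M] [DecidableEq M]
    (q : M → ℝ) (hq : ∀ u, 0 ≤ q u)
    (lam : ℝ) (hlam0 : 0 < lam) (hlam1 : lam < 1)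
    (k l : ℕ)
    (Upart : Fin l → Finset M)
    (hdisj : ∀ i j, i ≠ j → Disjoint (Upart i) (Upart j))
    (hcard : ∀ i, k ≤ (Upart i).card)
    (U : Finset M) (hU : U = Finset.univ.biUnion Upart)
    (z : ∀ _ : Fin l, Fin k → M)
    (hz : ∀ i, IsGreedySel q (fun u v => dist u v) lam (1 - lam) (Upart i) k (z i))
    (S : Fin l → Finset M) (hS : ∀ i, S i = Finset.univ.image (z i))
    (OptU : Finset M) (hOptU : IsOptSubset q lam (Finset.univ.biUnion S) k OptU)
    (O : Finset M) (hO : IsOptSubset q lam U k O)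
    (hk : 2 ≤ k) :
    Fobj q lam O ≤ 8 * Fobj q lam OptU := by
  classical
  obtain ⟨hOU, hOk, -⟩ := hO
  obtain ⟨-, -, hopt⟩ := hOptU
  have hk0 : (0 : ℝ) < k := by positivity
  have hSk : ∀ i, (S i).card = k := by
    intro i
    rw [hS, Finset.card_image_of_injective _ (hz i).1, Finset.card_univ, Fintype.card_fin]
  have hSU : ∀ i, S i ⊆ Upart i := by
    intro i x hx
    rw [hS, Finset.mem_image] at hx
    obtain ⟨j, -, rfl⟩ := hx
    exact (hz i).2.1 j
  have hFS : ∀ i, Fobj q lam (S i) ≤ Fobj q lam OptU := fun i =>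
    hopt _ (Finset.subset_biUnion_of_mem S (Finset.mem_univ i)) (hSk i)
  have hF0 : 0 ≤ Fobj q lam OptU := by
    unfold Fobj Qsum Dsum
    have h1 : 0 ≤ ∑ u ∈ OptU, q u := Finset.sum_nonneg fun u _ => hq u
    have h2 : 0 ≤ ∑ p ∈ OptU.offDiag, dist p.1 p.2 := Finset.sum_nonneg fun u _ => dist_nonneg
    have : 0 ≤ 1 - lam := by linarith
    positivity
  have hpart := fun i => aux_part q hq lam hlam0 hlam1 k hk (Upart i) (z i) (hz i)
    (Fobj q lam OptU) hF0 (by rw [← hS]; exact hFS i) (O ∩ Upart i) Finset.inter_subset_right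
    (hOk ▸ Finset.card_le_card Finset.inter_subset_left)
  choose ψ hψi hψm hψ using hpart
  have hex : ∀ o, ∃ i : Option (Fin l), ∀ j, o ∈ O → o ∈ Upart j → i = some j := by
    intro o
    by_cases h : ∃ j, o ∈ Upart j
    · obtain ⟨j, hj⟩ := h
      refine ⟨some j, fun j' _ hj' => ?_⟩
      by_contra hne
      exact Finset.disjoint_left.1 (hdisj j j' (fun h => hne (by rw [h]))) hj hj'
    · exact ⟨none, fun j _ hj => absurd ⟨j, hj⟩ h⟩
  choose c hc using hex
  let Ψ : M → M := fun o => match c o with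
    | some i => ψ i o
    | none => o
  have hΨ : ∀ i, ∀ o ∈ O ∩ Upart i, Ψ o = ψ i o := by
    intro i o ho
    rw [Finset.mem_inter] at ho
    simp only [Ψ, hc o i ho.1 ho.2]
  have hin : ∀ o ∈ O, ∃ i, o ∈ O ∩ Upart i := by
    intro o ho
    have := hOU ho
    rw [hU, Finset.mem_biUnion] at this
    obtain ⟨i, -, hi⟩ := this
    exact ⟨i, Finset.mem_inter.2 ⟨ho, hi⟩⟩
  have hΨS : ∀ i, ∀ o ∈ O ∩ Upart i, Ψ o ∈ S i := by
    intro i o ho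
    rw [hΨ i o ho, hS]
    exact hψm i o ho
  have hinj : Set.InjOn Ψ O := by
    intro x hx y hy hxy
    obtain ⟨i, hi⟩ := hin x hx
    obtain ⟨j, hj⟩ := hin y hy
    have hij : i = j := by
      by_contra hne
      refine Finset.disjoint_left.1 (hdisj i j hne) (hSU i (hΨS i x hi)) ?_
      rw [hxy]
      exact hSU j (hΨS j y hj)
    subst hij
    rw [hΨ i x hi, hΨ i y hj] at hxy
    exact hψi i hi hj hxy
  have hB : Fobj q lam (O.image Ψ) ≤ Fobj q lam OptU := by
    apply hopt
    · intro y hy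
      obtain ⟨x, hx, rfl⟩ := Finset.mem_image.1 hy
      obtain ⟨i, hi⟩ := hin x hx
      exact Finset.mem_biUnion.2 ⟨i, Finset.mem_univ _, hΨS i x hi⟩
    · rw [Finset.card_image_of_injOn hinj, hOk]
  have hOb : O = Finset.univ.biUnion (fun i => O ∩ Upart i) := by
    ext o
    rw [Finset.mem_biUnion]
    constructor
    · intro ho
      obtain ⟨i, hi⟩ := hin o ho
      exact ⟨i, Finset.mem_univ _, hi⟩
    · rintro ⟨i, -, hi⟩
      exact (Finset.mem_inter.1 hi).1
  have hpd : Set.PairwiseDisjoint (↑(Finset.univ : Finset (Fin l))) (fun i => O ∩ Upart i) := by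
    intro i _ j _ hij
    exact (hdisj i j hij).mono Finset.inter_subset_right Finset.inter_subset_right
  have hcost : ∑ o ∈ O, (lam * (q o - q (Ψ o)) + 2 * ((k : ℝ) - 1) * (1 - lam) * dist o (Ψ o))
      ≤ 6 * Fobj q lam OptU := by
    have hcards : ∑ i, ((O ∩ Upart i).card : ℝ) = k := by
      rw [← hOk]
      conv_rhs => rw [hOb]
      rw [Finset.card_biUnion (fun i _ j _ hij => hpd (by simp) (by simp) hij)]
      push_cast
      rfl
    calc _ = ∑ i, ∑ o ∈ O ∩ Upart i,
          (lam * (q o - q (Ψ o)) + 2 * ((k : ℝ) - 1) * (1 - lam) * dist o (Ψ o)) := by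
            conv_lhs => rw [hOb]
            rw [Finset.sum_biUnion hpd]
      _ ≤ ∑ i, ((O ∩ Upart i).card : ℝ) / k * (6 * Fobj q lam OptU) := by
            apply Finset.sum_le_sum
            intro i _
            refine le_trans (le_of_eq ?_) (hψ i)
            apply Finset.sum_congr rfl
            intro o ho
            rw [hΨ i o ho]
      _ = 6 * Fobj q lam OptU := by
            rw [← Finset.sum_mul, ← Finset.sum_div, hcards, div_self hk0.ne', one_mul]
  have hD := aux_map O Ψ hinj
  have hD' := mul_le_mul_of_nonneg_left hD (by linarith : (0 : ℝ) ≤ 1 - lam)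
  rw [hOk] at hD'
  rw [Finset.sum_add_distrib, ← Finset.mul_sum, ← Finset.mul_sum,
    Finset.sum_sub_distrib] at hcost
  have hQ : Qsum q (O.image Ψ) = ∑ o ∈ O, q (Ψ o) := Finset.sum_image hinj
  have hFO : Fobj q lam O = lam * (∑ o ∈ O, q o) + (1 - lam) * Dsum O := rfl
  have hFB : Fobj q lam (O.image Ψ) =
      lam * (∑ o ∈ O, q (Ψ o)) + (1 - lam) * Dsum (O.image Ψ) := by
    rw [← hQ]; rfl
  rw [hFB] at hB
  rw [hFO]
  linarith
end

section
/- (Mapping-decomposition bound from the proofs of Lemmas 2 and 5.) Let O ⊆ M be a finite set with |O| = k and let h : O → M be any map. Then Σ_{(u,v) ∈ O×O, u ≠ v} d(u, v) ≤ 2·(k−1)·Σ_{u ∈ O} d(u, h(u)) + Σ_{(u,v) ∈ O×O, u ≠ v} d(h(u), h(v)). -/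
open Finset

theorem stmt_19 {M : Type*} [MetricSpace M] [DecidableEq M]
    (k : ℕ) (O : Finset M) (hO : O.card = k) (h : M → M) :
    Dsum O ≤ 2 * ((k : ℝ) - 1) * (∑ u ∈ O, dist u (h u)) +
      ∑ p ∈ O.offDiag, dist (h p.1) (h p.2) := by
  have h1 : Dsum O ≤ ∑ p ∈ O.offDiag, ((dist p.1 (h p.1) + dist p.2 (h p.2)) +
      dist (h p.1) (h p.2)) := by
    unfold Dsum
    refine Finset.sum_le_sum fun p _ => ?_
    have := dist_triangle4 p.1 (h p.1) (h p.2) p.2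
    rw [dist_comm (h p.2) p.2] at this
    linarith
  rw [Finset.sum_add_distrib] at h1
  have h2 : ∑ p ∈ O.diag, (dist p.1 (h p.1) + dist p.2 (h p.2)) +
      ∑ p ∈ O.offDiag, (dist p.1 (h p.1) + dist p.2 (h p.2)) =
      ∑ p ∈ O ×ˢ O, (dist p.1 (h p.1) + dist p.2 (h p.2)) := by
    rw [← Finset.diag_union_offDiag, Finset.sum_union (Finset.disjoint_diag_offDiag O)]
  rw [Finset.sum_diag, Finset.sum_product] at h2
  simp only [Finset.sum_add_distrib, Finset.sum_const, nsmul_eq_mul, hO,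
    ← Finset.mul_sum] at h1 h2
  linarith
end
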